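/- arXiv:2507.17549 — 5 statements merged into one kernel-verified Lean document; each statement's English description precedes it below -/
import Mathlib

section
/- Let p, q, r, s > 0 be real numbers such that ε₁p + ε₂q + ε₃r + ε₄s ≠ 0 for every choice of signs εᵢ ∈ {1, −1}. Suppose P = (A, B, C, D) is a quadruple of points in the Euclidean plane ℝ² with dist(A,B) = p, dist(B,C) = q, dist(C,D) = r, dist(D,A) = s, and suppose Fⁿ(P) = P for some n ≥ 1, where F = F_C ∘ F_B is the composition of the two foldings. Then for every quadruple Q = (A', B', C', D') of points in ℝ² with dist(A',B') = p, dist(B',C') = q, dist(C',D') = r, dist(D',A') = s, one has Fⁿ(Q) = Q. -/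
/-!
Place the plane in `ℂ` and let `z₁, z₂, z₃, z₄` be the edge vectors of a quadrilateral, so that
`z₁ + z₂ + z₃ + z₄ = 0` and `kᵢ² = zᵢ * conj zᵢ` with `k = (p, q, r, s)`. Conjugating the closing
condition gives `∑ kᵢ² / zᵢ = 0`, hence the configurations lie on a plane cubic. It contains the
points `Pᵢⱼ` given by `zᵢ = zⱼ = 0`. Folding `B` keeps the ratio `z₃ : z₄`, so it sends `P` to the
third intersection of the cubic with the line `P P₃₄`; folding `C` does the same with `P₁₄`.
In the group law with origin `P₁₄` the double folding `F` is therefore the translation by `P₃₄`.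
If `Fⁿ` fixes one configuration, then `n • P₃₄ = 0`, and `Fⁿ` fixes every configuration.

The group law used is that of the Weierstrass model `linkageCurve`, with origin `P₁₄`. In terms of
the `zᵢ` and their conjugates the coordinates of a configuration are polynomials: `Edges.X`
and `Edges.X * Edges.w`. The discriminant of the model is, up to a nonzero factor, the product of all
`p ± q ± r ± s`, so the sign condition makes the curve smooth (`linkageCurve_Δ_ne_zero`).
The translation property is `IsLinkage.pt_foldC_foldB`. It follows from `IsLinkage.pt_foldC`, which
compares the two single foldings of the same configuration and is verified by computing the slope of
a chord; the chord is never vertical, by `IsLinkage.crossTerm_ne_zero`.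
Foldings never move `A` and `D`, and with these two vertices given a quadrilateral is recovered from
its point on the curve (`IsLinkage.ext_of_pt`).
-/

open EuclideanGeometry

/-- The Euclidean plane. -/
local notation "Plane" => EuclideanSpace ℝ (Fin 2)

/-- Folding of the vertex `B` of a quadruple `(A, B, C, D)`: the vertex `B` is replaced by its
reflection in the line through `A` and `C`. -/
noncomputable def foldB (P : Plane × Plane × Plane × Plane) : Plane × Plane × Plane × Plane :=
  (P.1, EuclideanGeometry.reflection (affineSpan ℝ {P.1, P.2.2.1}) P.2.1, P.2.2.1, P.2.2.2)

/-- Folding of the vertex `C` of a quadruple `(A, B, C, D)`: the vertex `C` is replaced by its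
reflection in the line through `B` and `D`. -/
noncomputable def foldC (P : Plane × Plane × Plane × Plane) : Plane × Plane × Plane × Plane :=
  (P.1, P.2.1, EuclideanGeometry.reflection (affineSpan ℝ {P.2.1, P.2.2.2}) P.2.2.1, P.2.2.2)

/-- The composition `F = F_C ∘ F_B` of the two foldings. -/
noncomputable def darbouxFold : Plane × Plane × Plane × Plane → Plane × Plane × Plane × Plane :=
  foldC ∘ foldB

open ComplexConjugate

/-! ### Edge vectors and the Weierstrass model -/

/-- The four edge vectors `AB`, `BC`, `CD`, `DA` of a quadrilateral, as complex numbers. -/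
structure Edges where
  z₁ : ℂ
  z₂ : ℂ
  z₃ : ℂ
  z₄ : ℂ

/-- The edge vectors of a closed quadrilateral with side lengths `p, q, r, s`; the lengths enter
through `z * conj z = ‖z‖ ^ 2`. -/
structure IsLinkage (p q r s : ℝ) (e : Edges) : Prop where
  sum : e.z₁ + e.z₂ + e.z₃ + e.z₄ = 0
  h₁ : e.z₁ * conj e.z₁ = (p : ℂ) ^ 2
  h₂ : e.z₂ * conj e.z₂ = (q : ℂ) ^ 2
  h₃ : e.z₃ * conj e.z₃ = (r : ℂ) ^ 2
  h₄ : e.z₄ * conj e.z₄ = (s : ℂ) ^ 2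

/-- The side lengths are positive and no `±1`-combination of them vanishes. The overall sign is
irrelevant, so the first sign is normalised to `+`. -/
structure GoodSides (p q r s : ℝ) : Prop where
  hp : 0 < p
  hq : 0 < q
  hr : 0 < r
  hs : 0 < s
  n₁ : p + q + r - s ≠ 0
  n₂ : p + q - r + s ≠ 0
  n₃ : p - q + r + s ≠ 0
  n₄ : p + q - r - s ≠ 0
  n₅ : p - q + r - s ≠ 0
  n₆ : p - q - r + s ≠ 0
  n₇ : p - q - r - s ≠ 0

/-- Reflection of the direction `z` in the line spanned by `D` (the value is `0` for
`D = 0`). -/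
noncomputable def reflDir (D z : ℂ) : ℂ := D / conj D * conj z

/-- Folding of the vertex `B`, on edge vectors. -/
noncomputable def Edges.foldB (e : Edges) : Edges :=
  ⟨reflDir (e.z₁ + e.z₂) e.z₁, reflDir (e.z₁ + e.z₂) e.z₂, e.z₃, e.z₄⟩

/-- Folding of the vertex `C`, on edge vectors. -/
noncomputable def Edges.foldC (e : Edges) : Edges :=
  ⟨e.z₁, reflDir (e.z₂ + e.z₃) e.z₂, reflDir (e.z₂ + e.z₃) e.z₃, e.z₄⟩

/-- The Weierstrass model `Y² = X³ + aX² + 16 p²q²r²s² X` of the configuration space of the linkage,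
where `a = p⁴ + q⁴ + r⁴ + s⁴ - 2(p²q² + ⋯ + r²s²)`. -/
noncomputable def linkageCurve (p q r s : ℝ) : WeierstrassCurve.Affine ℂ where
  a₁ := 0
  a₂ := (p : ℂ) ^ 4 + q ^ 4 + r ^ 4 + s ^ 4 - 2 * (p ^ 2 * q ^ 2 + p ^ 2 * r ^ 2 + p ^ 2 * s ^ 2
    + q ^ 2 * r ^ 2 + q ^ 2 * s ^ 2 + r ^ 2 * s ^ 2)
  a₃ := 0
  a₄ := 16 * (p : ℂ) ^ 2 * q ^ 2 * r ^ 2 * s ^ 2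
  a₆ := 0

/-- The `X`-coordinate of a configuration on `linkageCurve`. -/
noncomputable def Edges.X (e : Edges) : ℂ := 4 * conj e.z₁ * conj e.z₄ * e.z₂ * e.z₃

/-- The quotient `Y / X` of the coordinates of a configuration on `linkageCurve`; it is `4i` times
a sum of signed areas of triangles spanned by pairs of edge vectors. -/
noncomputable def Edges.w (e : Edges) : ℂ :=
  (conj e.z₁ * e.z₂ - e.z₁ * conj e.z₂) + (conj e.z₁ * e.z₄ - e.z₁ * conj e.z₄)
    + (conj e.z₂ * e.z₄ - e.z₂ * conj e.z₄)

/-- The point of `linkageCurve` with coordinates `x, y`; junk value `0` if these are not the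
coordinates of a nonsingular point. -/
noncomputable def curvePt (p q r s : ℝ) (x y : ℂ) : (linkageCurve p q r s).Point :=
  open Classical in
  if h : (linkageCurve p q r s).Nonsingular x y then .some x y h else 0

/-- The point of `linkageCurve` representing a configuration. -/
noncomputable def Edges.pt (p q r s : ℝ) (e : Edges) : (linkageCurve p q r s).Point :=
  curvePt p q r s e.X (e.X * e.w)

/-- The point by which a double folding translates `linkageCurve`, namely the point `z₃ = z₄ = 0` of
the plane cubic. -/
noncomputable def shiftPt (p q r s : ℝ) : (linkageCurve p q r s).Point :=
  curvePt p q r s (4 * p ^ 2 * r ^ 2) (4 * p ^ 2 * r ^ 2 * (q ^ 2 - r ^ 2 - p ^ 2 + s ^ 2))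

theorem linkageCurve_Δ_ne_zero {p q r s : ℝ} (hg : GoodSides p q r s) :
    (linkageCurve p q r s).Δ ≠ 0 := by
  obtain ⟨hp, hq, hr, hs, n₁, n₂, n₃, n₄, n₅, n₆, n₇⟩ := hg
  have hsum : p + q + r + s ≠ 0 := by positivity
  have key : (linkageCurve p q r s).Δ = ((16 * (16 * p ^ 2 * q ^ 2 * r ^ 2 * s ^ 2) ^ 2
      * ((p + q + r + s) * (p + q + r - s) * (p + q - r + s) * (p - q + r + s)
        * (p + q - r - s) * (p - q + r - s) * (p - q - r + s) * (p - q - r - s)) : ℝ) : ℂ) := by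
    simp only [WeierstrassCurve.Δ, WeierstrassCurve.b₂, WeierstrassCurve.b₄, WeierstrassCurve.b₆,
      WeierstrassCurve.b₈, linkageCurve]
    push_cast
    ring
  rw [key]
  simp only [ne_eq, Complex.ofReal_eq_zero]
  positivity

theorem curvePt_eq_some {p q r s : ℝ} (hg : GoodSides p q r s) {x y : ℂ}
    (h : (linkageCurve p q r s).Equation x y) :
    ∃ h', curvePt p q r s x y = .some x y h' := by
  have h' := ((linkageCurve p q r s).equation_iff_nonsingular_of_Δ_ne_zero
    (linkageCurve_Δ_ne_zero hg)).mp h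
  exact ⟨h', by rw [curvePt, dif_pos h']⟩

/-! ### Foldings as translations of the curve -/

section Linkage

variable {p q r s : ℝ} {e : Edges}

theorem IsLinkage.z₄_eq (he : IsLinkage p q r s e) : e.z₄ = -(e.z₁ + e.z₂ + e.z₃) := by
  linear_combination he.sum

theorem IsLinkage.equation (he : IsLinkage p q r s e) :
    (linkageCurve p q r s).Equation e.X (e.X * e.w) := by
  obtain ⟨z₁, z₂, z₃, z₄⟩ := e
  obtain rfl : z₄ = -(z₁ + z₂ + z₃) := he.z₄_eq
  obtain ⟨-, h₁, h₂, h₃, h₄⟩ := he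
  rw [WeierstrassCurve.Affine.equation_iff]
  simp only [linkageCurve, Edges.X, Edges.w, map_neg, map_add] at *
  have e4 : ∀ t : ℂ, t ^ 4 = (t ^ 2) ^ 2 := fun t => by ring
  rw [e4 p, e4 q, e4 r, e4 s, ← h₁, ← h₂, ← h₃, ← h₄]
  ring

theorem shift_equation : (linkageCurve p q r s).Equation (4 * p ^ 2 * r ^ 2)
    (4 * p ^ 2 * r ^ 2 * (q ^ 2 - r ^ 2 - p ^ 2 + s ^ 2)) := by
  rw [WeierstrassCurve.Affine.equation_iff]
  simp only [linkageCurve]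
  ring

theorem norm_of_mul_conj {z : ℂ} {t : ℝ} (ht : 0 < t) (h : z * conj z = (t : ℂ) ^ 2) :
    ‖z‖ = t := by
  rw [Complex.mul_conj, Complex.normSq_eq_norm_sq] at h
  norm_cast at h
  exact (pow_left_inj₀ (norm_nonneg z) ht.le two_ne_zero).mp h

theorem IsLinkage.norms (hg : GoodSides p q r s) (he : IsLinkage p q r s e) :
    ‖e.z₁‖ = p ∧ ‖e.z₂‖ = q ∧ ‖e.z₃‖ = r ∧ ‖e.z₄‖ = s :=
  ⟨norm_of_mul_conj hg.hp he.h₁, norm_of_mul_conj hg.hq he.h₂, norm_of_mul_conj hg.hr he.h₃,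
    norm_of_mul_conj hg.hs he.h₄⟩

theorem IsLinkage.ne_zero (hg : GoodSides p q r s) (he : IsLinkage p q r s e) :
    e.z₁ ≠ 0 ∧ e.z₂ ≠ 0 ∧ e.z₃ ≠ 0 ∧ e.z₄ ≠ 0 := by
  obtain ⟨h₁, h₂, h₃, h₄⟩ := he.norms hg
  refine ⟨?_, ?_, ?_, ?_⟩ <;> rw [← norm_pos_iff]
  exacts [h₁ ▸ hg.hp, h₂ ▸ hg.hq, h₃ ▸ hg.hr, h₄ ▸ hg.hs]

theorem IsLinkage.z₁_add_z₂ (hg : GoodSides p q r s) (he : IsLinkage p q r s e) :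
    e.z₁ + e.z₂ ≠ 0 := by
  intro h
  obtain ⟨h₁, h₂, h₃, h₄⟩ := he.norms hg
  have a : e.z₁ = -e.z₂ := by linear_combination h
  have b : e.z₃ = -e.z₄ := by linear_combination he.sum - h
  rw [a, norm_neg] at h₁
  rw [b, norm_neg] at h₃
  exact hg.n₅ (by linarith)

theorem IsLinkage.z₂_add_z₃ (hg : GoodSides p q r s) (he : IsLinkage p q r s e) :
    e.z₂ + e.z₃ ≠ 0 := by
  intro h
  obtain ⟨h₁, h₂, h₃, h₄⟩ := he.norms hg
  have a : e.z₂ = -e.z₃ := by linear_combination h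
  have b : e.z₁ = -e.z₄ := by linear_combination he.sum - h
  rw [a, norm_neg] at h₂
  rw [b, norm_neg] at h₁
  exact hg.n₅ (by linarith)

theorem IsLinkage.z₁_add_z₃ (hg : GoodSides p q r s) (he : IsLinkage p q r s e) :
    e.z₁ + e.z₃ ≠ 0 := by
  intro h
  obtain ⟨h₁, h₂, h₃, h₄⟩ := he.norms hg
  have a : e.z₁ = -e.z₃ := by linear_combination h
  have b : e.z₂ = -e.z₄ := by linear_combination he.sum - h
  rw [a, norm_neg] at h₁
  rw [b, norm_neg] at h₂
  exact hg.n₄ (by linarith)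

theorem conj_ne_zero {z : ℂ} (h : z ≠ 0) : conj z ≠ 0 := (map_ne_zero _).mpr h

theorem conj_reflDir (D z : ℂ) : conj (reflDir D z) = conj D / D * z := by
  simp [reflDir]

theorem reflDir_mul_conj {D : ℂ} (hD : D ≠ 0) (z : ℂ) :
    reflDir D z * conj (reflDir D z) = z * conj z := by
  have := conj_ne_zero hD
  rw [conj_reflDir, reflDir]
  field_simp

theorem reflDir_add (D z w : ℂ) : reflDir D z + reflDir D w = reflDir D (z + w) := by
  simp [reflDir, mul_add]

theorem reflDir_self {D : ℂ} (hD : D ≠ 0) : reflDir D D = D :=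
  div_mul_cancel₀ _ (conj_ne_zero hD)

theorem reflDir_reflDir {D : ℂ} (hD : D ≠ 0) (z : ℂ) : reflDir D (reflDir D z) = z := by
  have := conj_ne_zero hD
  rw [reflDir, conj_reflDir]
  field_simp

theorem Edges.foldB_foldB (h : e.z₁ + e.z₂ ≠ 0) : e.foldB.foldB = e := by
  simp only [Edges.foldB, reflDir_add, reflDir_self h, reflDir_reflDir h]

theorem IsLinkage.foldB (hg : GoodSides p q r s) (he : IsLinkage p q r s e) :
    IsLinkage p q r s e.foldB := by
  have h := he.z₁_add_z₂ hg
  constructor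
  · simp only [Edges.foldB, reflDir_add, reflDir_self h, he.sum]
  · simp only [Edges.foldB, reflDir_mul_conj h, he.h₁]
  · simp only [Edges.foldB, reflDir_mul_conj h, he.h₂]
  · exact he.h₃
  · exact he.h₄

theorem IsLinkage.foldC (hg : GoodSides p q r s) (he : IsLinkage p q r s e) :
    IsLinkage p q r s e.foldC := by
  have h := he.z₂_add_z₃ hg
  constructor
  · simp only [Edges.foldC]
    rw [add_assoc e.z₁, reflDir_add, reflDir_self h]
    linear_combination he.sum
  · exact he.h₁
  · simp only [Edges.foldC, reflDir_mul_conj h, he.h₂]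
  · simp only [Edges.foldC, reflDir_mul_conj h, he.h₃]
  · exact he.h₄

/-- This expression is the nontrivial factor of the difference of `X`-coordinates in
`IsLinkage.X_sub`. It vanishes only if folding `B` brings it to `D`, which the sign condition
excludes. -/
theorem IsLinkage.crossTerm_ne_zero (hg : GoodSides p q r s) (he : IsLinkage p q r s e) :
    conj e.z₃ * e.z₁ - conj e.z₄ * e.z₂ ≠ 0 := by
  intro h
  have hB := he.foldB hg
  have hD := he.z₁_add_z₂ hg
  have hD' := conj_ne_zero hD
  refine hB.z₂_add_z₃ hg ?_
  have h' := congrArg conj h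
  simp only [map_sub, map_mul, Complex.conj_conj, map_zero] at h'
  have hs : conj e.z₁ + conj e.z₂ + conj e.z₃ + conj e.z₄ = 0 := by
    rw [← map_add, ← map_add, ← map_add, he.sum, map_zero]
  simp only [Edges.foldB, reflDir]
  rw [div_mul_eq_mul_div, div_add' _ _ _ hD', div_eq_zero_iff]
  left
  rw [map_add]
  linear_combination conj e.z₂ * he.sum + h'

theorem IsLinkage.X_sub (he : IsLinkage p q r s e) : e.X - 4 * (p : ℂ) ^ 2 * r ^ 2 =
    -4 * (conj e.z₁ * e.z₃ * (conj e.z₃ * e.z₁ - conj e.z₄ * e.z₂)) := by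
  rw [Edges.X, ← he.h₁, ← he.h₃]
  ring

/-- A configuration and `shiftPt` have distinct `X`-coordinates, so only the generic case of the
addition law occurs. -/
theorem IsLinkage.X_ne (hg : GoodSides p q r s) (he : IsLinkage p q r s e) :
    e.X ≠ 4 * (p : ℂ) ^ 2 * r ^ 2 := by
  obtain ⟨h₁, h₂, h₃, h₄⟩ := he.ne_zero hg
  rw [← sub_ne_zero, he.X_sub]
  have := he.crossTerm_ne_zero hg
  have := conj_ne_zero h₁
  simp_all

/-- The numerator of the inverse map: on the curve, `w` plus its value at `shiftPt` is a multiple of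
the factor occurring in `IsLinkage.X_sub`. -/
theorem IsLinkage.w_add (he : IsLinkage p q r s e) :
    e.w + ((q : ℂ) ^ 2 - r ^ 2 - p ^ 2 + s ^ 2) =
      2 * (conj e.z₃ * e.z₁ - conj e.z₄ * e.z₂) := by
  obtain ⟨z₁, z₂, z₃, z₄⟩ := e
  obtain rfl : z₄ = -(z₁ + z₂ + z₃) := he.z₄_eq
  obtain ⟨-, h₁, h₂, h₃, h₄⟩ := he
  simp only [Edges.w, map_neg, map_add] at *
  rw [← h₁, ← h₂, ← h₃, ← h₄]
  ring

/-- With `A` and `D` fixed, a configuration is determined by its point on `linkageCurve`. The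
factorisations `IsLinkage.X_sub` and `IsLinkage.w_add` recover `conj z₁ * z₃`, hence the ratio
`z₃ : z₁`, and then `X` recovers `z₂`. -/
theorem IsLinkage.ext_of_pt (hg : GoodSides p q r s) {e f : Edges} (he : IsLinkage p q r s e)
    (hf : IsLinkage p q r s f) (h₄ : e.z₄ = f.z₄) (hpt : e.pt p q r s = f.pt p q r s) :
    e = f := by
  obtain ⟨he', hee⟩ := curvePt_eq_some hg he.equation
  obtain ⟨hf', hff⟩ := curvePt_eq_some hg hf.equation
  rw [Edges.pt, Edges.pt, hee, hff, WeierstrassCurve.Affine.Point.some.injEq] at hpt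
  obtain ⟨hX, hY⟩ := hpt
  obtain ⟨e1, e2, e3, e4⟩ := he.ne_zero hg
  obtain ⟨f1, f2, f3, f4⟩ := hf.ne_zero hg
  have e1' := conj_ne_zero e1
  have e4' := conj_ne_zero e4
  have hX0 : e.X ≠ 0 := by simp [Edges.X, *]
  rw [← hX] at hY
  have hw := mul_left_cancel₀ hX0 hY
  have hv : conj e.z₃ * e.z₁ - conj e.z₄ * e.z₂ = conj f.z₃ * f.z₁ - conj f.z₄ * f.z₂ := by
    linear_combination (1 / 2 : ℂ) * (hf.w_add - he.w_add + hw)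
  have h13 : conj e.z₁ * e.z₃ = conj f.z₁ * f.z₃ := by
    apply mul_right_cancel₀ (he.crossTerm_ne_zero hg)
    have a := he.X_sub
    have b := hf.X_sub
    rw [← hv] at b
    linear_combination (1 / 4 : ℂ) * (a - b - hX)
  have h2 : e.z₂ = f.z₂ := by
    have hX' := hX
    simp only [Edges.X, ← h₄] at hX'
    have : 4 * (conj e.z₁ * e.z₃) * conj e.z₄ ≠ 0 := by simp [*]
    apply mul_left_cancel₀ this
    linear_combination hX' - 4 * conj e.z₄ * f.z₂ * h13
  have hr : e.z₃ * f.z₁ = f.z₃ * e.z₁ := by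
    apply mul_left_cancel₀ (mul_ne_zero e1' (conj_ne_zero f1))
    linear_combination conj f.z₁ * f.z₁ * h13 + conj f.z₁ * f.z₃ * (hf.h₁ - he.h₁)
  have hs : e.z₁ + e.z₃ = f.z₁ + f.z₃ := by
    linear_combination he.sum - hf.sum - h2 - h₄
  have h3 : e.z₃ = f.z₃ := by
    apply mul_left_cancel₀ (he.z₁_add_z₃ hg)
    linear_combination hr + e.z₃ * hs
  have h1 : e.z₁ = f.z₁ := by linear_combination hs - h3
  cases e; cases f
  simp_all

/-- The two single foldings of a configuration differ by `shiftPt` on the curve. Written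
in the edge vectors and their conjugates, with `z₄` eliminated and the squared side lengths replaced
by `z * conj z`, the addition formulas become rational identities in independent variables. -/
theorem IsLinkage.pt_foldC (hg : GoodSides p q r s) (he : IsLinkage p q r s e) :
    e.foldC.pt p q r s = e.foldB.pt p q r s + shiftPt p q r s := by
  have hB := he.foldB hg
  have hC := he.foldC hg
  obtain ⟨hB', hBB⟩ := curvePt_eq_some hg hB.equation
  obtain ⟨hC', hCC⟩ := curvePt_eq_some hg hC.equation
  obtain ⟨hT', hTT⟩ := curvePt_eq_some hg (shift_equation (p := p) (q := q) (r := r) (s := s))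
  rw [Edges.pt, Edges.pt, shiftPt, hBB, hCC, hTT,
    WeierstrassCurve.Affine.Point.add_of_X_ne (hB.X_ne hg),
    WeierstrassCurve.Affine.Point.some.injEq]
  have hX := hB.X_ne hg
  have hD := he.z₁_add_z₂ hg
  have hd := he.z₂_add_z₃ hg
  have hD' := conj_ne_zero hD
  have hd' := conj_ne_zero hd
  -- the slope of the chord through the point of `e.foldB` and `shiftPt`, with denominators cancelled
  obtain ⟨ℓ, hℓ⟩ : ∃ ℓ, ℓ = e.foldB.w +
      2 * conj e.z₁ * conj e.z₃ * (e.z₂ + e.z₃) / conj (e.z₂ + e.z₃) := ⟨_, rfl⟩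
  have hslope : (linkageCurve p q r s).slope e.foldB.X (4 * p ^ 2 * r ^ 2) (e.foldB.X * e.foldB.w)
      (4 * p ^ 2 * r ^ 2 * (q ^ 2 - r ^ 2 - p ^ 2 + s ^ 2)) = ℓ := by
    rw [WeierstrassCurve.Affine.slope_of_X_ne hX, div_eq_iff (sub_ne_zero.mpr hX), hℓ]
    clear hX hℓ hBB hCC hTT hT' hB' hC' hB hC
    obtain ⟨z₁, z₂, z₃, z₄⟩ := e
    obtain rfl : z₄ = -(z₁ + z₂ + z₃) := he.z₄_eq
    obtain ⟨-, h₁, h₂, h₃, h₄⟩ := he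
    simp only [Edges.X, Edges.w, Edges.foldB, conj_reflDir, map_neg, map_add] at *
    rw [← h₁, ← h₂, ← h₃, ← h₄]
    simp only [reflDir, map_add]
    field_simp
    ring
  rw [hslope]
  have hx : e.foldC.X = (linkageCurve p q r s).addX e.foldB.X (4 * p ^ 2 * r ^ 2) ℓ := by
    rw [hℓ]
    clear hX hslope hℓ hBB hCC hTT hT' hB' hC' hB hC
    obtain ⟨z₁, z₂, z₃, z₄⟩ := e
    obtain rfl : z₄ = -(z₁ + z₂ + z₃) := he.z₄_eq
    obtain ⟨-, h₁, h₂, h₃, h₄⟩ := he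
    have e4 : ∀ t : ℂ, t ^ 4 = (t ^ 2) ^ 2 := fun t => by ring
    simp only [WeierstrassCurve.Affine.addX, linkageCurve, Edges.X, Edges.w, Edges.foldB,
      Edges.foldC, conj_reflDir, map_neg, map_add] at *
    rw [e4 p, e4 q, e4 r, e4 s, ← h₁, ← h₂, ← h₃, ← h₄]
    simp only [reflDir, map_add]
    field_simp
    ring
  refine ⟨hx, ?_⟩
  rw [WeierstrassCurve.Affine.addY, WeierstrassCurve.Affine.negAddY, ← hx,
    WeierstrassCurve.Affine.negY, hℓ]
  clear hx hX hslope hℓ hBB hCC hTT hT' hB' hC' hB hC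
  obtain ⟨z₁, z₂, z₃, z₄⟩ := e
  obtain rfl : z₄ = -(z₁ + z₂ + z₃) := he.z₄_eq
  simp only [linkageCurve, Edges.X, Edges.w, Edges.foldB,
    Edges.foldC, conj_reflDir, map_neg, map_add] at *
  simp only [reflDir, map_add]
  field_simp
  ring

/-- Since folding `B` is an involution, a double folding is translation by `shiftPt`. -/
theorem IsLinkage.pt_foldC_foldB (hg : GoodSides p q r s) (he : IsLinkage p q r s e) :
    e.foldB.foldC.pt p q r s = e.pt p q r s + shiftPt p q r s := by
  rw [(he.foldB hg).pt_foldC hg, Edges.foldB_foldB (he.z₁_add_z₂ hg)]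

end Linkage

/-! ### Quadruples of points in the plane -/

/-- The identification of the plane with `ℂ`. -/
noncomputable def toC (P : Plane) : ℂ := ⟨P 0, P 1⟩

theorem toC_injective : Function.Injective toC := by
  intro P Q h
  simp only [toC, Complex.mk.injEq] at h
  ext i
  fin_cases i
  exacts [h.1, h.2]

theorem mul_conj_toC (P Q : Plane) :
    (toC Q - toC P) * conj (toC Q - toC P) = (dist P Q : ℂ) ^ 2 := by
  rw [Complex.mul_conj, EuclideanSpace.dist_eq, ← Complex.ofReal_pow, Real.sq_sqrt (by positivity)]
  simp only [Fin.sum_univ_two, Real.dist_eq, sq_abs, toC, Complex.normSq_apply, Complex.sub_re,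
    Complex.sub_im]
  congr 1
  ring

theorem toC_reflection {A C : Plane} (h : toC C - toC A ≠ 0) (B : Plane) :
    toC (EuclideanGeometry.reflection (affineSpan ℝ {A, C}) B) =
      toC A + reflDir (toC C - toC A) (toC B - toC A) := by
  have hn : (C 0 - A 0) ^ 2 + (C 1 - A 1) ^ 2 ≠ 0 := by
    intro h0
    apply h
    have a : C 0 - A 0 = 0 := by nlinarith [sq_nonneg (C 0 - A 0), sq_nonneg (C 1 - A 1)]
    have b : C 1 - A 1 = 0 := by nlinarith [sq_nonneg (C 0 - A 0), sq_nonneg (C 1 - A 1)]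
    apply Complex.ext <;> simp [toC, a, b]
  -- the parameter on the line `AC` of the foot of the perpendicular from `B`
  obtain ⟨t, ht⟩ : ∃ t : ℝ, t = ((B 0 - A 0) * (C 0 - A 0) + (B 1 - A 1) * (C 1 - A 1)) /
    ((C 0 - A 0) ^ 2 + (C 1 - A 1) ^ 2) := ⟨_, rfl⟩
  have hproj : (orthogonalProjection (affineSpan ℝ {A, C}) B : Plane) =
      AffineMap.lineMap A C t := by
    rw [coe_orthogonalProjection_eq_iff_mem]
    refine ⟨AffineMap.lineMap_mem_affineSpan_pair _ _ _, ?_⟩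
    rw [direction_affineSpan, vectorSpan_pair_rev, Submodule.mem_orthogonal_singleton_iff_inner_right]
    simp only [AffineMap.lineMap_apply, vsub_eq_sub, vadd_eq_add, PiLp.inner_apply,
      Fin.sum_univ_two, PiLp.sub_apply, PiLp.add_apply, PiLp.smul_apply, smul_eq_mul,
      RCLike.inner_apply, conj_trivial]
    rw [ht]
    field_simp
    ring
  have hconj := conj_ne_zero h
  rw [reflection_apply', hproj, reflDir, div_mul_eq_mul_div, ← sub_eq_iff_eq_add', eq_div_iff hconj]
  apply Complex.ext <;>
  · simp only [toC, AffineMap.lineMap_apply, vsub_eq_sub, vadd_eq_add, PiLp.sub_apply,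
      PiLp.add_apply, PiLp.smul_apply, smul_eq_mul, Complex.sub_re, Complex.sub_im,
      Complex.mul_re, Complex.mul_im, Complex.conj_re, Complex.conj_im]
    rw [ht]
    field_simp
    ring

/-- The edge vectors of a quadruple of points. -/
noncomputable def edges (P : Plane × Plane × Plane × Plane) : Edges :=
  ⟨toC P.2.1 - toC P.1, toC P.2.2.1 - toC P.2.1, toC P.2.2.2 - toC P.2.2.1, toC P.1 - toC P.2.2.2⟩

theorem edges_foldB {P : Plane × Plane × Plane × Plane}
    (h : (edges P).z₁ + (edges P).z₂ ≠ 0) : edges (foldB P) = (edges P).foldB := by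
  obtain ⟨A, B, C, D⟩ := P
  have hs : (edges (A, B, C, D)).z₁ + (edges (A, B, C, D)).z₂ = toC C - toC A := by
    simp [edges]
  rw [hs] at h
  have h2 : reflDir (toC C - toC A) (toC C - toC B) =
      (toC C - toC A) - reflDir (toC C - toC A) (toC B - toC A) := by
    rw [eq_sub_iff_add_eq, reflDir_add]
    conv_rhs => rw [← reflDir_self h]
    congr 1
    ring
  rw [Edges.foldB, hs]
  simp only [edges, foldB, toC_reflection h, h2]
  congr 1 <;> ring

theorem edges_foldC {P : Plane × Plane × Plane × Plane}
    (h : (edges P).z₂ + (edges P).z₃ ≠ 0) : edges (foldC P) = (edges P).foldC := by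
  obtain ⟨A, B, C, D⟩ := P
  have hs : (edges (A, B, C, D)).z₂ + (edges (A, B, C, D)).z₃ = toC D - toC B := by
    simp [edges]
  rw [hs] at h
  have h2 : reflDir (toC D - toC B) (toC D - toC C) =
      (toC D - toC B) - reflDir (toC D - toC B) (toC C - toC B) := by
    rw [eq_sub_iff_add_eq, reflDir_add]
    conv_rhs => rw [← reflDir_self h]
    congr 1
    ring
  rw [Edges.foldC, hs]
  simp only [edges, foldC, toC_reflection h, h2]
  congr 1 <;> ring

theorem isLinkage_edges {p q r s : ℝ} {A B C D : Plane} (hAB : dist A B = p) (hBC : dist B C = q)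
    (hCD : dist C D = r) (hDA : dist D A = s) : IsLinkage p q r s (edges (A, B, C, D)) := by
  constructor
  · simp [edges]
  · simp only [edges, mul_conj_toC, hAB]
  · simp only [edges, mul_conj_toC, hBC]
  · simp only [edges, mul_conj_toC, hCD]
  · simp only [edges, mul_conj_toC, hDA]

/-- Along an orbit the side lengths persist, the point on the curve moves by multiples of `shiftPt`,
and the vertices `A` and `D` stay. -/
theorem iterate_darbouxFold {p q r s : ℝ} (hg : GoodSides p q r s)
    {P : Plane × Plane × Plane × Plane} (hP : IsLinkage p q r s (edges P)) (k : ℕ) :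
    IsLinkage p q r s (edges (darbouxFold^[k] P)) ∧
      (edges (darbouxFold^[k] P)).pt p q r s = (edges P).pt p q r s + k • shiftPt p q r s ∧
      (darbouxFold^[k] P).1 = P.1 ∧ (darbouxFold^[k] P).2.2.2 = P.2.2.2 := by
  induction k with
  | zero => simpa using hP
  | succ k ih =>
    obtain ⟨hL, hpt, hA, hD⟩ := ih
    rw [Function.iterate_succ_apply']
    have hB : edges (foldB (darbouxFold^[k] P)) = _ := edges_foldB (hL.z₁_add_z₂ hg)
    have hLB := hL.foldB hg
    have hC : edges (darbouxFold (darbouxFold^[k] P)) = (edges (darbouxFold^[k] P)).foldB.foldC := by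
      rw [← hB] at hLB ⊢
      exact edges_foldC (hLB.z₂_add_z₃ hg)
    refine ⟨hC ▸ hLB.foldC hg, ?_, hA, hD⟩
    rw [hC, hL.pt_foldC_foldB hg, hpt, succ_nsmul, add_assoc]

/-- **Darboux's porism.** If some quadrilateral with side lengths `p, q, r, s` (satisfying the
condition that no `±1`-combination of the side lengths vanishes) is restored after `n` double
foldings `F = F_C ∘ F_B`, then every quadrilateral with the same side lengths is restored after
`n` double foldings. -/
theorem darboux_porism (p q r s : ℝ) (hp : 0 < p) (hq : 0 < q) (hr : 0 < r) (hs : 0 < s)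
    (hsign : ∀ ε₁ ε₂ ε₃ ε₄ : ℝ, (ε₁ = 1 ∨ ε₁ = -1) → (ε₂ = 1 ∨ ε₂ = -1) →
      (ε₃ = 1 ∨ ε₃ = -1) → (ε₄ = 1 ∨ ε₄ = -1) → ε₁ * p + ε₂ * q + ε₃ * r + ε₄ * s ≠ 0)
    (n : ℕ) (hn : 1 ≤ n)
    (A B C D : Plane) (hAB : dist A B = p) (hBC : dist B C = q) (hCD : dist C D = r)
    (hDA : dist D A = s) (hP : darbouxFold^[n] (A, B, C, D) = (A, B, C, D)) :
    ∀ A' B' C' D' : Plane, dist A' B' = p → dist B' C' = q → dist C' D' = r → dist D' A' = s →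
      darbouxFold^[n] (A', B', C', D') = (A', B', C', D') := by
  have hg : GoodSides p q r s := by
    refine ⟨hp, hq, hr, hs, ?_, ?_, ?_, ?_, ?_, ?_, ?_⟩
    · simpa [sub_eq_add_neg] using hsign 1 1 1 (-1) (by simp) (by simp) (by simp) (by simp)
    · simpa [sub_eq_add_neg] using hsign 1 1 (-1) 1 (by simp) (by simp) (by simp) (by simp)
    · simpa [sub_eq_add_neg] using hsign 1 (-1) 1 1 (by simp) (by simp) (by simp) (by simp)
    · simpa [sub_eq_add_neg] using hsign 1 1 (-1) (-1) (by simp) (by simp) (by simp) (by simp)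
    · simpa [sub_eq_add_neg] using hsign 1 (-1) 1 (-1) (by simp) (by simp) (by simp) (by simp)
    · simpa [sub_eq_add_neg] using hsign 1 (-1) (-1) 1 (by simp) (by simp) (by simp) (by simp)
    · simpa [sub_eq_add_neg] using hsign 1 (-1) (-1) (-1) (by simp) (by simp) (by simp) (by simp)
  -- the closed orbit shows that `shiftPt` is an `n`-torsion point
  have hT : n • shiftPt p q r s = 0 := by
    have h := (iterate_darbouxFold hg (isLinkage_edges hAB hBC hCD hDA) n).2.1
    rw [hP] at h
    exact left_eq_add.mp h
  intro A' B' C' D' hAB' hBC' hCD' hDA'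
  have hL := isLinkage_edges hAB' hBC' hCD' hDA'
  obtain ⟨hLn, hpt, hA, hD⟩ := iterate_darbouxFold hg hL n
  rw [hT, add_zero] at hpt
  generalize darbouxFold^[n] (A', B', C', D') = Q at *
  obtain ⟨A₂, B₂, C₂, D₂⟩ := Q
  obtain rfl : A₂ = A' := hA
  obtain rfl : D₂ = D' := hD
  have h := hLn.ext_of_pt hg hL rfl hpt
  simp only [edges, Edges.mk.injEq, sub_left_inj, sub_right_inj] at h
  rw [toC_injective h.1, toC_injective h.2.2.1]
end

section
/- Let C_a and C_b be circles in ℝ³ and let ℓ > 0. Suppose there exists a nondegenerate zigzag with edge length ℓ between C_a and C_b which is closed of period n (A_{i+n} = A_i and B_{i+n} = B_i for all i), where n ≥ 1. Then the set of pairs (A₀, B₀) ∈ C_a × C_b that occur as the initial pair of a nondegenerate zigzag with edge length ℓ which is closed of period n is infinite. -/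
/-!
In angles `α`, `β` on the two circles, the condition that two points be at distance `ℓ` reads
`G α β = 0` for a trigonometric polynomial `G` of degree one in each angle. The Hamiltonian flow
`α' = ∂G/∂β`, `β' = -∂G/∂α` preserves this curve; it is the real form of the invariant
differential of the elliptic curve `G = 0`, and the two involutions exchanging the two neighbours
of a given vertex reverse it. Hence all links of a zigzag can be moved simultaneously, each by the
flow, run alternately forwards and backwards.

The point to prove is that consecutive links move their common vertex in the same way
(`Coeffs.flow_step`). On the curve `G = 0` the angle `α` can be eliminated: `β` satisfies an
autonomous second order equation `β'' = force β` (`Coeffs.flow_snd_snd`), and the two neighbours of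
a given vertex give opposite values of `∂G/∂α` (`Coeffs.Ga_neg`), so that both motions of the
common vertex have the same initial data. Since the motion of a link depends only on the link, the
deformed zigzags keep the period (`exists_deformation`). No regularity of the curve is needed for
this.

If no vertex moved with nonzero velocity, every vertex of the second circle would be equidistant
from all points of the first one (`Coeffs.w_eq_zero`), and then the first circle can simply be
rotated. In each case a vertex with nonzero velocity takes infinitely many positions, and shifting
the indices puts it into the initial pair.
-/

open Module

/-- Three-dimensional Euclidean space. -/
local notation "Space" => EuclideanSpace ℝ (Fin 3)

/-- The circle in a 2-dimensional affine subspace `Pl` of `ℝ³` with center `O ∈ Pl` and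
radius `r`. -/
def circle3D (Pl : AffineSubspace ℝ Space) (O : Space) (r : ℝ) : Set Space :=
  {x | x ∈ Pl ∧ dist x O = r}

/-- A nondegenerate zigzag with edge length `ℓ` between two circles `Ca` and `Cb` in `ℝ³`:
sequences `A : ℤ → Ca` and `B : ℤ → Cb` with `dist (A i) (B i) = ℓ`,
`dist (B i) (A (i+1)) = ℓ`, `A (i+1) ≠ A i` and `B (i+1) ≠ B i` for all `i`. -/
def IsZigzag (Ca Cb : Set Space) (ℓ : ℝ) (A B : ℤ → Space) : Prop :=
  (∀ i, A i ∈ Ca) ∧ (∀ i, B i ∈ Cb) ∧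
  (∀ i, dist (A i) (B i) = ℓ) ∧ (∀ i, dist (B i) (A (i + 1)) = ℓ) ∧
  (∀ i, A (i + 1) ≠ A i) ∧ (∀ i, B (i + 1) ≠ B i)

namespace ZigzagPorism

open Filter Topology Real

/-! ### Germs of solutions of autonomous differential equations -/

/-- Two solutions of an autonomous `C¹` equation with the same value at time `0` agree near `0`. -/
theorem germ_unique {E : Type*} [NormedAddCommGroup E] [NormedSpace ℝ E]
    (v : E → E) (hv : ContDiff ℝ 1 v) (f g : ℝ → E)
    (hf : ∀ᶠ t in 𝓝 (0 : ℝ), HasDerivAt f (v (f t)) t)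
    (hg : ∀ᶠ t in 𝓝 (0 : ℝ), HasDerivAt g (v (g t)) t) (h0 : f 0 = g 0) :
    f =ᶠ[𝓝 0] g := by
  obtain ⟨K, s, hs, hL⟩ := (hv.contDiffAt (x := f 0)).exists_lipschitzOnWith
  have hfc : ∀ᶠ t in 𝓝 (0 : ℝ), f t ∈ s := hf.self_of_nhds.continuousAt hs
  have hgc : ∀ᶠ t in 𝓝 (0 : ℝ), g t ∈ s :=
    hg.self_of_nhds.continuousAt (by rw [← h0]; exact hs)
  exact ODE_solution_unique_of_eventually (v := fun _ => v) (s := fun _ => s) (K := K)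
    (Eventually.of_forall fun _ => hL) (hf.and hfc) (hg.and hgc) h0

theorem germ_exists {E : Type*} [NormedAddCommGroup E] [NormedSpace ℝ E] [CompleteSpace E]
    (v : E → E) (hv : ContDiff ℝ 1 v) (x : E) :
    ∃ f : ℝ → E, f 0 = x ∧ ∀ᶠ t in 𝓝 (0 : ℝ), HasDerivAt f (v (f t)) t := by
  obtain ⟨f, h0, ε, hε, h⟩ :=
    (hv.contDiffAt (x := x)).exists_forall_mem_closedBall_exists_eq_forall_mem_Ioo_hasDerivAt₀ 0
  refine ⟨f, h0, ?_⟩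
  filter_upwards [Ioo_mem_nhds (a := 0 - ε) (b := 0 + ε) (by linarith) (by linarith)] with t ht
  exact h t ht

/-! ### The incidence curve and its Hamiltonian flow -/

/-- The coefficients of a trigonometric polynomial of bidegree `(1, 1)` in two angles. -/
structure Coeffs where
  /-- the constant term -/
  c : ℝ
  /-- the coefficient of `cos α` -/
  p1 : ℝ
  /-- the coefficient of `sin α` -/
  p2 : ℝ
  /-- the coefficient of `cos β` -/
  q1 : ℝ
  /-- the coefficient of `sin β` -/
  q2 : ℝ
  /-- the coefficient of `cos α * cos β` -/
  m11 : ℝ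
  /-- the coefficient of `cos α * sin β` -/
  m12 : ℝ
  /-- the coefficient of `sin α * cos β` -/
  m21 : ℝ
  /-- the coefficient of `sin α * sin β` -/
  m22 : ℝ

namespace Coeffs

variable (K : Coeffs)

/-- The same polynomial with the roles of the two angles exchanged. -/
def swap : Coeffs := ⟨K.c, K.q1, K.q2, K.p1, K.p2, K.m11, K.m21, K.m12, K.m22⟩

/-- The part of the polynomial not involving `α`. -/
noncomputable def c0 (β : ℝ) : ℝ := K.c + K.q1 * cos β + K.q2 * sin β

/-- The coefficient of `cos α`, as a function of `β`. -/
noncomputable def w1 (β : ℝ) : ℝ := K.p1 + K.m11 * cos β + K.m12 * sin β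

/-- The coefficient of `sin α`, as a function of `β`. -/
noncomputable def w2 (β : ℝ) : ℝ := K.p2 + K.m21 * cos β + K.m22 * sin β

/-- The trigonometric polynomial itself. -/
noncomputable def G (α β : ℝ) : ℝ := K.c0 β + K.w1 β * cos α + K.w2 β * sin α

/-- The partial derivative `∂G/∂α`; the partial derivative `∂G/∂β` is `K.swap.Ga β α`. -/
noncomputable def Ga (α β : ℝ) : ℝ := -K.w1 β * sin α + K.w2 β * cos α

/-- The Hamiltonian vector field of `G` on the plane of the angles `(α, β)`. -/
noncomputable def X (z : ℝ × ℝ) : ℝ × ℝ := (K.swap.Ga z.2 z.1, -K.Ga z.1 z.2)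

/-- Half the derivative of `w1 ^ 2 + w2 ^ 2 - c0 ^ 2`. -/
noncomputable def force (β : ℝ) : ℝ :=
  K.w1 β * (-K.m11 * sin β + K.m12 * cos β) + K.w2 β * (-K.m21 * sin β + K.m22 * cos β)
    - K.c0 β * (-K.q1 * sin β + K.q2 * cos β)

theorem G_swap (α β : ℝ) : K.swap.G β α = K.G α β := by
  simp only [G, c0, w1, w2, swap]; ring

theorem contDiff_X : ContDiff ℝ 1 K.X := by
  unfold X Ga w1 w2; fun_prop

theorem contDiff_force : ContDiff ℝ 1 K.force := by
  unfold force c0 w1 w2; fun_prop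

/-- The integral curve of the Hamiltonian field through `(α, β)`, meaningful only near time `0`. -/
noncomputable def flow (α β : ℝ) : ℝ → ℝ × ℝ :=
  (germ_exists K.X K.contDiff_X (α, β)).choose

theorem flow_zero (α β : ℝ) : K.flow α β 0 = (α, β) :=
  (germ_exists K.X K.contDiff_X (α, β)).choose_spec.1

theorem flow_hasDerivAt (α β : ℝ) :
    ∀ᶠ t in 𝓝 (0 : ℝ), HasDerivAt (K.flow α β) (K.X (K.flow α β t)) t :=
  (germ_exists K.X K.contDiff_X (α, β)).choose_spec.2

theorem flow_fst (α β : ℝ) : ∀ᶠ t in 𝓝 (0 : ℝ),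
    HasDerivAt (fun u => (K.flow α β u).1)
      (K.swap.Ga (K.flow α β t).2 (K.flow α β t).1) t := by
  filter_upwards [K.flow_hasDerivAt α β] with t ht
  exact ht.fst

theorem flow_snd (α β : ℝ) : ∀ᶠ t in 𝓝 (0 : ℝ),
    HasDerivAt (fun u => (K.flow α β u).2)
      (-K.Ga (K.flow α β t).1 (K.flow α β t).2) t := by
  filter_upwards [K.flow_hasDerivAt α β] with t ht
  exact ht.snd

/-- `G` is a first integral of its Hamiltonian flow. -/
theorem flow_G (α β : ℝ) : ∀ᶠ t in 𝓝 (0 : ℝ),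
    K.G (K.flow α β t).1 (K.flow α β t).2 = K.G α β := by
  have h := germ_unique (fun _ : ℝ => (0 : ℝ)) contDiff_const
    (fun t => K.G (K.flow α β t).1 (K.flow α β t).2) (fun _ => K.G α β) ?_
    (Eventually.of_forall fun t => hasDerivAt_const _ _) (by simp only [flow_zero])
  · exact h
  · filter_upwards [K.flow_fst α β, K.flow_snd α β] with t h1 h2
    unfold G c0 w1 w2
    refine ((((h2.cos.const_mul K.q1).const_add K.c).add (h2.sin.const_mul K.q2)).add
      ((((h2.cos.const_mul K.m11).const_add K.p1).add (h2.sin.const_mul K.m12)).mul h1.cos)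
      |>.add ((((h2.cos.const_mul K.m21).const_add K.p2).add
        (h2.sin.const_mul K.m22)).mul h1.sin)).congr_deriv ?_
    simp only [Ga, swap, w1, w2, Pi.add_apply]
    ring

/-- On the curve `G = 0` the second angle moves by an autonomous equation `β'' = force β`, in
which the first angle has been eliminated. -/
theorem flow_snd_snd (α β : ℝ) (h0 : K.G α β = 0) : ∀ᶠ t in 𝓝 (0 : ℝ),
    HasDerivAt (fun u => -K.Ga (K.flow α β u).1 (K.flow α β u).2)
      (K.force (K.flow α β t).2) t := by
  filter_upwards [K.flow_fst α β, K.flow_snd α β, K.flow_G α β] with t h1 h2 h3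
  rw [h0] at h3
  unfold Ga w1 w2
  refine ((((((h2.cos.const_mul K.m11).const_add K.p1).add (h2.sin.const_mul K.m12)).neg).mul
      h1.sin).add ((((h2.cos.const_mul K.m21).const_add K.p2).add
        (h2.sin.const_mul K.m22)).mul h1.cos)).neg.congr_deriv ?_
  simp only [G, c0, w1, w2] at h3
  simp only [force, Ga, swap, c0, w1, w2, Pi.add_apply, Pi.neg_apply]
  linear_combination (-K.q1 * sin (K.flow α β t).2 + K.q2 * cos (K.flow α β t).2) * h3 +
    ((K.p1 + K.m11 * cos (K.flow α β t).2 + K.m12 * sin (K.flow α β t).2) *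
        (-K.m11 * sin (K.flow α β t).2 + K.m12 * cos (K.flow α β t).2) +
      (K.p2 + K.m21 * cos (K.flow α β t).2 + K.m22 * sin (K.flow α β t).2) *
        (-K.m21 * sin (K.flow α β t).2 + K.m22 * cos (K.flow α β t).2)) *
      sin_sq_add_cos_sq (K.flow α β t).1

/-- The counterpart of `flow_snd_snd` for the first angle. -/
theorem flow_fst_fst (α β : ℝ) (h0 : K.G α β = 0) : ∀ᶠ t in 𝓝 (0 : ℝ),
    HasDerivAt (fun u => K.swap.Ga (K.flow α β u).2 (K.flow α β u).1)
      (K.swap.force (K.flow α β t).1) t := by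
  filter_upwards [K.flow_fst α β, K.flow_snd α β, K.flow_G α β] with t h1 h2 h3
  rw [h0] at h3
  unfold Ga w1 w2
  refine (((((h1.cos.const_mul K.m11).const_add K.q1).add (h1.sin.const_mul K.m21)).neg.mul
      h2.sin).add ((((h1.cos.const_mul K.m12).const_add K.q2).add
        (h1.sin.const_mul K.m22)).mul h2.cos)).congr_deriv ?_
  simp only [G, c0, w1, w2] at h3
  simp only [force, Ga, swap, c0, w1, w2, Pi.add_apply, Pi.neg_apply]
  linear_combination (-K.p1 * sin (K.flow α β t).1 + K.p2 * cos (K.flow α β t).1) * h3 +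
    ((K.q1 + K.m11 * cos (K.flow α β t).1 + K.m21 * sin (K.flow α β t).1) *
        (-K.m11 * sin (K.flow α β t).1 + K.m21 * cos (K.flow α β t).1) +
      (K.q2 + K.m12 * cos (K.flow α β t).1 + K.m22 * sin (K.flow α β t).1) *
        (-K.m12 * sin (K.flow α β t).1 + K.m22 * cos (K.flow α β t).1)) *
      sin_sq_add_cos_sq (K.flow α β t).2

/-- `flow_snd` and `flow_snd_snd` as one first-order system for `β` and its velocity. -/
theorem flow_snd_germ (α β : ℝ) (h0 : K.G α β = 0) : ∀ᶠ t in 𝓝 (0 : ℝ),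
    HasDerivAt (fun u => ((K.flow α β u).2, -K.Ga (K.flow α β u).1 (K.flow α β u).2))
      ((fun y : ℝ × ℝ => (y.2, K.force y.1))
        ((K.flow α β t).2, -K.Ga (K.flow α β t).1 (K.flow α β t).2)) t := by
  filter_upwards [K.flow_snd α β, K.flow_snd_snd α β h0] with t h1 h2
  exact h1.prodMk h2

/-- `flow_fst` and `flow_fst_fst` as one first-order system for `α` and its velocity. -/
theorem flow_fst_germ (α β : ℝ) (h0 : K.G α β = 0) : ∀ᶠ t in 𝓝 (0 : ℝ),
    HasDerivAt (fun u => ((K.flow α β u).1, K.swap.Ga (K.flow α β u).2 (K.flow α β u).1))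
      ((fun y : ℝ × ℝ => (y.2, K.swap.force y.1))
        ((K.flow α β t).1, K.swap.Ga (K.flow α β t).2 (K.flow α β t).1)) t := by
  filter_upwards [K.flow_fst α β, K.flow_fst_fst α β h0] with t h1 h2
  exact h1.prodMk h2

/-- If two distinct points joined to the same point `β` of the second circle have the same
derivative `∂G/∂α`, then `β` is joined to the whole first circle: the vector `(w1 β, w2 β)` is
then orthogonal to a nonzero vector and to its rotation by a right angle. -/
theorem w_eq_zero_of_Ga_eq (α α' β : ℝ) (h : K.G α β = 0) (h' : K.G α' β = 0)
    (hne : ¬(cos α' = cos α ∧ sin α' = sin α)) (hd : K.Ga α' β = K.Ga α β) :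
    K.w1 β = 0 ∧ K.w2 β = 0 := by
  simp only [G, Ga] at h h' hd
  have h1 : (K.w1 β * K.w1 β + K.w2 β * K.w2 β) *
      ((cos α' - cos α) * (cos α' - cos α) + (sin α' - sin α) * (sin α' - sin α)) = 0 := by
    linear_combination (K.w1 β * (cos α' - cos α) + K.w2 β * (sin α' - sin α)) * (h' - h) +
      (-K.w1 β * (sin α' - sin α) + K.w2 β * (cos α' - cos α)) * hd
  rcases mul_eq_zero.1 h1 with h2 | h2
  · exact mul_self_add_mul_self_eq_zero.1 h2
  · have h3 := mul_self_add_mul_self_eq_zero.1 h2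
    exact absurd ⟨sub_eq_zero.1 h3.1, sub_eq_zero.1 h3.2⟩ hne

/-- Two distinct points of the first circle joined to the same point of the second circle have
opposite derivatives `∂G/∂α`, being the two roots of `c0 + w1 cos α + w2 sin α = 0`. -/
theorem Ga_neg (α α' β : ℝ) (h : K.G α β = 0) (h' : K.G α' β = 0)
    (hne : ¬(cos α' = cos α ∧ sin α' = sin α)) : K.Ga α' β = -K.Ga α β := by
  by_cases hd : K.Ga α' β = K.Ga α β
  · obtain ⟨h1, h2⟩ := K.w_eq_zero_of_Ga_eq α α' β h h' hne hd
    simp [Ga, h1, h2]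
  · have hsq : (K.Ga α' β - K.Ga α β) * (K.Ga α' β + K.Ga α β) = 0 := by
      simp only [G, Ga] at h h' ⊢
      linear_combination (K.w1 β ^ 2 + K.w2 β ^ 2) *
          (sin_sq_add_cos_sq α' - sin_sq_add_cos_sq α) -
        (K.w1 β * cos α' + K.w2 β * sin α' - K.c0 β) * h' +
        (K.w1 β * cos α + K.w2 β * sin α - K.c0 β) * h
    rcases mul_eq_zero.1 hsq with h1 | h1
    · exact absurd (sub_eq_zero.1 h1) hd
    · linarith

/-- If `∂G/∂α` vanishes at one of two distinct points joined to the same point of the second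
circle, then the latter is joined to the whole first circle. -/
theorem w_eq_zero (α α' β : ℝ) (h : K.G α β = 0) (h' : K.G α' β = 0)
    (hne : ¬(cos α' = cos α ∧ sin α' = sin α)) (hd : K.Ga α β = 0) :
    K.w1 β = 0 ∧ K.w2 β = 0 := by
  refine K.w_eq_zero_of_Ga_eq α α' β h h' hne ?_
  rw [K.Ga_neg α α' β h h' hne, hd, neg_zero]

/-- The flow of `G` through `(α, β)` and the flow of `K.swap` through `(β, α')` (the reversed
Hamiltonian flow through `(α', β)`) move the shared angle `β` in the same way: both motions solve
`β'' = force β` and their initial velocities agree. -/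
theorem flow_step (α α' β : ℝ) (h : K.G α β = 0) (h' : K.G α' β = 0)
    (hne : ¬(cos α' = cos α ∧ sin α' = sin α)) :
    ∀ᶠ t in 𝓝 (0 : ℝ), (K.flow α β t).2 = (K.swap.flow β α' t).1 := by
  have hs := K.swap.flow_fst_germ β α' (by rw [G_swap, h'])
  have key := germ_unique (fun y : ℝ × ℝ => (y.2, K.force y.1))
    (contDiff_snd.prodMk (K.contDiff_force.comp contDiff_fst)) _ _ (K.flow_snd_germ α β h) hs
    (by simp only [flow_zero]; rw [← K.Ga_neg α α' β h h' hne]; rfl)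
  filter_upwards [key] with t ht
  exact congrArg Prod.fst ht

end Coeffs

/-! ### Deforming a closed zigzag in the angle coordinates -/

/-- A property that is periodic in the index and holds near time `0` for each index holds on a
common neighbourhood of `0` for all indices. -/
theorem eventually_forall_of_periodic (n : ℕ) (hn : 1 ≤ n) (q : ℤ → ℝ → Prop)
    (hq : ∀ i, q (i + n) = q i) (h : ∀ i, ∀ᶠ u in 𝓝 (0 : ℝ), q i u) :
    ∀ᶠ u in 𝓝 (0 : ℝ), ∀ i, q i u := by
  have h1 : ∀ᶠ u in 𝓝 (0 : ℝ), ∀ i ∈ Finset.Ico (0 : ℤ) n, q i u :=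
    (eventually_all_finset _).2 fun i _ => h i
  filter_upwards [h1] with u hu i
  have hn' : (0 : ℤ) < n := by exact_mod_cast hn
  have hp : Function.Periodic q (n : ℤ) := hq
  have h2 : q i = q (i % n) := by
    have := hp.int_mul (i / n) (i % n)
    rw [← this]
    congr 1
    have := Int.emod_add_mul_ediv i n
    rw [Int.cast_id]; linarith
  rw [h2]
  exact hu _ (Finset.mem_Ico.2 ⟨Int.emod_nonneg _ hn'.ne', Int.emod_lt_of_pos _ hn'⟩)

/-- A closed zigzag, given by its angles, belongs to a one-parameter family of closed zigzags of
the same period in which some vertex moves with nonzero velocity. -/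
theorem exists_deformation (K : Coeffs) (n : ℕ) (hn : 1 ≤ n) (α β : ℤ → ℝ)
    (hα : ∀ i, α (i + n) = α i) (hβ : ∀ i, β (i + n) = β i)
    (h1 : ∀ i, K.G (α i) (β i) = 0) (h2 : ∀ i, K.G (α (i + 1)) (β i) = 0)
    (hneα : ∀ i, ¬(cos (α (i + 1)) = cos (α i) ∧ sin (α (i + 1)) = sin (α i)))
    (hneβ : ∀ i, ¬(cos (β (i + 1)) = cos (β i) ∧ sin (β (i + 1)) = sin (β i))) :
    ∃ a b : ℤ → ℝ → ℝ, (∀ i, a (i + n) = a i) ∧ (∀ i, b (i + n) = b i) ∧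
      (∀ i, a i 0 = α i) ∧ (∀ i, b i 0 = β i) ∧
      (∀ i, ContinuousAt (a i) 0) ∧ (∀ i, ContinuousAt (b i) 0) ∧
      (∀ᶠ u in 𝓝 (0 : ℝ), ∀ i, K.G (a i u) (b i u) = 0 ∧ K.G (a (i + 1) u) (b i u) = 0) ∧
      ∃ j d, d ≠ 0 ∧ (HasDerivAt (a j) d 0 ∨ HasDerivAt (b j) d 0) := by
  by_cases hw : ∀ i, K.w1 (β i) = 0 ∧ K.w2 (β i) = 0
  · -- Every second-circle vertex is joined to the whole first circle: rotate the first circle.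
    refine ⟨fun i u => α i + u, fun i _ => β i, fun i => by simp only [hα],
      fun i => by simp only [hβ], fun i => by simp, fun i => rfl,
      fun i => by fun_prop, fun i => by fun_prop, Eventually.of_forall fun u i => ?_,
      0, 1, one_ne_zero, Or.inl ((hasDerivAt_id _).const_add _)⟩
    have := h1 i
    simp only [Coeffs.G, (hw i).1, (hw i).2] at this ⊢
    simpa using this
  · rw [not_forall] at hw
    obtain ⟨j, hj⟩ := hw
    have hd : K.Ga (α j) (β j) ≠ 0 := fun h0 =>
      hj (K.w_eq_zero (α j) (α (j + 1)) (β j) (h1 j) (h2 j) (hneα j) h0)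
    refine ⟨fun i u => (K.flow (α i) (β i) u).1, fun i u => (K.flow (α i) (β i) u).2,
      fun i => by simp only [hα, hβ], fun i => by simp only [hα, hβ],
      fun i => by simp only [Coeffs.flow_zero], fun i => by simp only [Coeffs.flow_zero],
      fun i => (K.flow_fst (α i) (β i)).self_of_nhds.continuousAt,
      fun i => (K.flow_snd (α i) (β i)).self_of_nhds.continuousAt,
      eventually_forall_of_periodic n hn _ (fun i => ?_) fun i => ?_,
      j, _, neg_ne_zero.2 hd, Or.inr ?_⟩
    · have h3 : i + n + 1 = i + 1 + n := by ring
      simp only [h3, hα, hβ]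
    · -- The flow through `(β i, α (i + 1))` links the two neighbouring flows.
      have s1 := K.flow_step (α i) (α (i + 1)) (β i) (h1 i) (h2 i) (hneα i)
      have s2 := K.swap.flow_step (β i) (β (i + 1)) (α (i + 1))
        (by rw [Coeffs.G_swap, h2]) (by rw [Coeffs.G_swap, h1]) (hneβ i)
      filter_upwards [s1, s2, K.flow_G (α i) (β i), K.swap.flow_G (β i) (α (i + 1))]
        with u e1 e2 g1 g2
      refine ⟨g1.trans (h1 i), ?_⟩
      rw [e1, ← Coeffs.G_swap]
      have e3 : (K.flow (α (i + 1)) (β (i + 1)) u).1 = (K.swap.flow (β i) (α (i + 1)) u).2 :=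
        e2.symm
      rw [e3, g2, Coeffs.G_swap, h2]
    · have := (K.flow_snd (α j) (β j)).self_of_nhds
      simpa only [Coeffs.flow_zero] using this

/-- An angle moving with nonzero velocity does not describe a stationary point of the circle. -/
theorem deriv_eq_zero_of_stationary (f : ℝ → ℝ) (d : ℝ) (hf : HasDerivAt f d 0)
    (h : ∀ᶠ u in 𝓝 (0 : ℝ), cos (f u) = cos (f 0) ∧ sin (f u) = sin (f 0)) : d = 0 := by
  have hc : (fun u => cos (f u)) =ᶠ[𝓝 0] fun _ => cos (f 0) := h.mono fun _ hu => hu.1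
  have hs : (fun u => sin (f u)) =ᶠ[𝓝 0] fun _ => sin (f 0) := h.mono fun _ hu => hu.2
  have h1 := (hf.cos.congr_of_eventuallyEq hc.symm).unique (hasDerivAt_const _ _)
  have h2 := (hf.sin.congr_of_eventuallyEq hs.symm).unique (hasDerivAt_const _ _)
  linear_combination (-sin (f 0)) * h1 + cos (f 0) * h2 - d * sin_sq_add_cos_sq (f 0)

/-! ### Angle coordinates on circles in space -/

/-- The point with angle `θ` on the circle with center `O` and radius `r` in the plane through
`O` spanned by `e` and `f`. -/
noncomputable def pt (O e f : Space) (r θ : ℝ) : Space := O + ((r * cos θ) • e + (r * sin θ) • f)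

theorem continuous_pt (O e f : Space) (r : ℝ) : Continuous (pt O e f r) := by
  unfold pt; fun_prop

/-- Every circle is parametrized by the angle with respect to an orthonormal basis `e`, `f` of the
direction of its plane. -/
theorem exists_param (P : AffineSubspace ℝ Space) (hP : finrank ℝ P.direction = 2)
    (O : Space) (hO : O ∈ P) (r : ℝ) (hr : 0 < r) :
    ∃ e f : Space, inner ℝ e e = 1 ∧ inner ℝ f f = 1 ∧ inner ℝ e f = 0 ∧
      ∀ x, x ∈ circle3D P O r ↔ ∃ θ, x = pt O e f r θ := by
  let b := (stdOrthonormalBasis ℝ P.direction).reindex (finCongr hP)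
  have hb := fun i j => orthonormal_iff_ite.1 b.orthonormal i j
  have hee : inner ℝ (b 0 : Space) (b 0) = 1 := (hb 0 0).trans (if_pos rfl)
  have hff : inner ℝ (b 1 : Space) (b 1) = 1 := (hb 1 1).trans (if_pos rfl)
  have hef : inner ℝ (b 0 : Space) (b 1) = 0 := (hb 0 1).trans (if_neg (by decide))
  have hfe : inner ℝ (b 1 : Space) (b 0) = 0 := (hb 1 0).trans (if_neg (by decide))
  have hnorm : ∀ s t : ℝ, ‖s • (b 0 : Space) + t • (b 1 : Space)‖ ^ 2 = s ^ 2 + t ^ 2 := by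
    intro s t
    rw [← real_inner_self_eq_norm_sq]
    simp only [inner_add_left, inner_add_right, real_inner_smul_left, real_inner_smul_right,
      hee, hff, hef, hfe]
    ring
  refine ⟨b 0, b 1, hee, hff, hef, fun x => ⟨fun hx => ?_, ?_⟩⟩
  · obtain ⟨hxP, hxr⟩ := hx
    let y : P.direction := ⟨x - O, AffineSubspace.vsub_mem_direction hxP hO⟩
    have hy : x - O = b.repr y 0 • (b 0 : Space) + b.repr y 1 • (b 1 : Space) := by
      have := congrArg (Subtype.val) (b.sum_repr y)
      rw [Fin.sum_univ_two] at this
      exact this.symm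
    generalize b.repr y 0 = s at hy
    generalize b.repr y 1 = t at hy
    have hst : s ^ 2 + t ^ 2 = r ^ 2 := by
      rw [← hnorm, ← hy, ← dist_eq_norm, hxr]
    have hz : ‖(⟨s, t⟩ : ℂ)‖ = r := by
      rw [← sq_eq_sq₀ (norm_nonneg _) hr.le, ← hst, Complex.sq_norm, Complex.normSq_mk]; ring
    refine ⟨Complex.arg ⟨s, t⟩, ?_⟩
    have hc := Complex.norm_mul_cos_arg ⟨s, t⟩
    have hs := Complex.norm_mul_sin_arg ⟨s, t⟩
    rw [hz] at hc hs
    simp only [pt, hc, hs, ← hy]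
    abel
  · rintro ⟨θ, rfl⟩
    constructor
    · have hm : (r * cos θ) • (b 0 : Space) + (r * sin θ) • (b 1 : Space) ∈ P.direction :=
        P.direction.add_mem (P.direction.smul_mem _ (b 0).2) (P.direction.smul_mem _ (b 1).2)
      have := AffineSubspace.vadd_mem_of_mem_direction hm hO
      rwa [vadd_eq_add, add_comm] at this
    · rw [dist_eq_norm, ← sq_eq_sq₀ (norm_nonneg _) hr.le, pt, add_sub_cancel_left, hnorm]
      linear_combination r ^ 2 * sin_sq_add_cos_sq θ

theorem inner_pt_sub_left (O e f : Space) (r θ : ℝ) (hee : inner ℝ e e = 1)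
    (hef : inner ℝ e f = 0) : inner ℝ e (pt O e f r θ - O) = r * cos θ := by
  rw [pt, add_sub_cancel_left, inner_add_right, real_inner_smul_right, real_inner_smul_right,
    hee, hef]
  ring

theorem inner_pt_sub_right (O e f : Space) (r θ : ℝ) (hff : inner ℝ f f = 1)
    (hef : inner ℝ e f = 0) : inner ℝ f (pt O e f r θ - O) = r * sin θ := by
  rw [real_inner_comm] at hef
  rw [pt, add_sub_cancel_left, inner_add_right, real_inner_smul_right, real_inner_smul_right,
    hff, hef]
  ring

theorem cos_sin_of_pt_eq (O e f : Space) (r θ θ' : ℝ) (hr : 0 < r) (hee : inner ℝ e e = 1)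
    (hff : inner ℝ f f = 1) (hef : inner ℝ e f = 0) (h : pt O e f r θ = pt O e f r θ') :
    cos θ = cos θ' ∧ sin θ = sin θ' := by
  have h1 := inner_pt_sub_left O e f r θ hee hef
  have h2 := inner_pt_sub_right O e f r θ hff hef
  rw [h, inner_pt_sub_left O e f r θ' hee hef] at h1
  rw [h, inner_pt_sub_right O e f r θ' hff hef] at h2
  exact ⟨(mul_left_cancel₀ hr.ne' h1).symm, (mul_left_cancel₀ hr.ne' h2).symm⟩

/-- The coefficients for which `G α β` is the squared distance, minus `ℓ ^ 2`, between the points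
with angles `α` and `β` of two circles. -/
noncomputable def distCoeffs (O e f O' e' f' : Space) (r r' ℓ : ℝ) : Coeffs where
  c := inner ℝ (O - O') (O - O') + r ^ 2 + r' ^ 2 - ℓ ^ 2
  p1 := 2 * r * inner ℝ (O - O') e
  p2 := 2 * r * inner ℝ (O - O') f
  q1 := -2 * r' * inner ℝ (O - O') e'
  q2 := -2 * r' * inner ℝ (O - O') f'
  m11 := -2 * r * r' * inner ℝ e e'
  m12 := -2 * r * r' * inner ℝ e f'
  m21 := -2 * r * r' * inner ℝ f e'
  m22 := -2 * r * r' * inner ℝ f f'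

theorem dist_pt_iff (O e f O' e' f' : Space) (r r' ℓ : ℝ) (hℓ : 0 < ℓ)
    (hee : inner ℝ e e = 1) (hff : inner ℝ f f = 1) (hef : inner ℝ e f = 0)
    (hee' : inner ℝ e' e' = 1) (hff' : inner ℝ f' f' = 1) (hef' : inner ℝ e' f' = 0) (α β : ℝ) :
    dist (pt O e f r α) (pt O' e' f' r' β) = ℓ ↔
      (distCoeffs O e f O' e' f' r r' ℓ).G α β = 0 := by
  rw [← sq_eq_sq₀ dist_nonneg hℓ.le, ← sub_eq_zero, dist_eq_norm, ← real_inner_self_eq_norm_sq]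
  have hd : pt O e f r α - pt O' e' f' r' β = (O - O') + ((r * cos α) • e + (r * sin α) • f
      - ((r' * cos β) • e' + (r' * sin β) • f')) := by
    simp only [pt]; abel
  rw [hd]
  simp only [Coeffs.G, Coeffs.c0, Coeffs.w1, Coeffs.w2, distCoeffs]
  generalize O - O' = D
  suffices h : inner ℝ (D + ((r * cos α) • e + (r * sin α) • f
      - ((r' * cos β) • e' + (r' * sin β) • f'))) (D + ((r * cos α) • e + (r * sin α) • f
      - ((r' * cos β) • e' + (r' * sin β) • f'))) = inner ℝ D D + r ^ 2 + r' ^ 2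
      + 2 * r * (cos α * inner ℝ D e + sin α * inner ℝ D f)
      - 2 * r' * (cos β * inner ℝ D e' + sin β * inner ℝ D f')
      - 2 * r * r' * (cos α * cos β * inner ℝ e e' + cos α * sin β * inner ℝ e f'
        + sin α * cos β * inner ℝ f e' + sin α * sin β * inner ℝ f f') by
    rw [h]
    apply iff_of_eq
    congr 1
    ring
  simp only [inner_add_left, inner_add_right, inner_sub_left, inner_sub_right,
    real_inner_smul_left, real_inner_smul_right, hee, hff, hee', hff', hef, hef',
    real_inner_comm D, real_inner_comm e f, real_inner_comm e' f', real_inner_comm e e',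
    real_inner_comm e f', real_inner_comm f e', real_inner_comm f f']
  linear_combination r ^ 2 * sin_sq_add_cos_sq α + r' ^ 2 * sin_sq_add_cos_sq β

end ZigzagPorism

open ZigzagPorism Filter Topology in
/-- If some nondegenerate zigzag with edge length `ℓ` between two circles in `ℝ³` is closed of
period `n ≥ 1`, then there are infinitely many pairs `(A₀, B₀)` occurring as the initial pair of
a nondegenerate zigzag with edge length `ℓ` which is closed of period `n`. -/
theorem zigzag_porism_infinitude
    (Pa Pb : AffineSubspace ℝ Space)
    (hPa : finrank ℝ Pa.direction = 2) (hPb : finrank ℝ Pb.direction = 2)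
    (Oa Ob : Space) (hOa : Oa ∈ Pa) (hOb : Ob ∈ Pb)
    (ra rb : ℝ) (hra : 0 < ra) (hrb : 0 < rb)
    (ℓ : ℝ) (hℓ : 0 < ℓ) (n : ℕ) (hn : 1 ≤ n)
    (A B : ℤ → Space) (hz : IsZigzag (circle3D Pa Oa ra) (circle3D Pb Ob rb) ℓ A B)
    (hclosed : ∀ i : ℤ, A (i + n) = A i ∧ B (i + n) = B i) :
    {pab : Space × Space | ∃ A' B' : ℤ → Space,
      IsZigzag (circle3D Pa Oa ra) (circle3D Pb Ob rb) ℓ A' B' ∧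
      (∀ i : ℤ, A' (i + n) = A' i ∧ B' (i + n) = B' i) ∧
      A' 0 = pab.1 ∧ B' 0 = pab.2}.Infinite := by
  obtain ⟨e, f, hee, hff, hef, hCa⟩ := exists_param Pa hPa Oa hOa ra hra
  obtain ⟨e', f', hee', hff', hef', hCb⟩ := exists_param Pb hPb Ob hOb rb hrb
  obtain ⟨hA, hB, hd1, hd2, hneA, hneB⟩ := hz
  -- Choosing the angle as a function of the point keeps the angles periodic.
  have hexA : ∀ x, ∃ θ, x ∈ circle3D Pa Oa ra → x = pt Oa e f ra θ := fun x => by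
    by_cases hx : x ∈ circle3D Pa Oa ra
    · exact ((hCa x).1 hx).imp fun _ h _ => h
    · exact ⟨0, fun h => absurd h hx⟩
  have hexB : ∀ x, ∃ θ, x ∈ circle3D Pb Ob rb → x = pt Ob e' f' rb θ := fun x => by
    by_cases hx : x ∈ circle3D Pb Ob rb
    · exact ((hCb x).1 hx).imp fun _ h _ => h
    · exact ⟨0, fun h => absurd h hx⟩
  choose angA hangA using hexA
  choose angB hangB using hexB
  have hA' := fun i => hangA (A i) (hA i)
  have hB' := fun i => hangB (B i) (hB i)
  have hdist := dist_pt_iff Oa e f Ob e' f' ra rb ℓ hℓ hee hff hef hee' hff' hef'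
  obtain ⟨a, b, hap, hbp, ha0, hb0, hac, hbc, hG, j, d, hd, hj⟩ :=
    exists_deformation (distCoeffs Oa e f Ob e' f' ra rb ℓ) n hn (fun i => angA (A i))
      (fun i => angB (B i)) (fun i => by simp only [(hclosed i).1])
      (fun i => by simp only [(hclosed i).2])
      (fun i => by rw [← hdist, ← hA', ← hB', hd1])
      (fun i => by rw [← hdist, ← hA', ← hB', dist_comm, hd2])
      (fun i h => hneA i (by rw [hA' (i + 1), hA' i, pt, h.1, h.2, ← pt]))
      (fun i h => hneB i (by rw [hB' (i + 1), hB' i, pt, h.1, h.2, ← pt]))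
  have hAc : ∀ i, ContinuousAt (fun u => pt Oa e f ra (a i u)) 0 := fun i =>
    (continuous_pt Oa e f ra).continuousAt.comp (hac i)
  have hBc : ∀ i, ContinuousAt (fun u => pt Ob e' f' rb (b i u)) 0 := fun i =>
    (continuous_pt Ob e' f' rb).continuousAt.comp (hbc i)
  have hshift : ∀ i : ℤ, i + n + 1 = i + 1 + n := fun i => by ring
  have hneA' : ∀ᶠ u in 𝓝 (0 : ℝ), ∀ i,
      pt Oa e f ra (a (i + 1) u) ≠ pt Oa e f ra (a i u) := by
    refine eventually_forall_of_periodic n hn _ (fun i => ?_) fun i => ?_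
    · simp only [hshift, hap]
    · refine ((hAc (i + 1)).ne_iff_eventually_ne (hAc i)).1 ?_
      simp only [ha0]
      rw [← hA', ← hA']
      exact hneA i
  have hneB' : ∀ᶠ u in 𝓝 (0 : ℝ), ∀ i,
      pt Ob e' f' rb (b (i + 1) u) ≠ pt Ob e' f' rb (b i u) := by
    refine eventually_forall_of_periodic n hn _ (fun i => ?_) fun i => ?_
    · simp only [hshift, hbp]
    · refine ((hBc (i + 1)).ne_iff_eventually_ne (hBc i)).1 ?_
      simp only [hb0]
      rw [← hB', ← hB']
      exact hneB i
  intro hfin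
  -- Shifting the indices by `j` makes the moving vertex part of an initial pair.
  have hmem : ∀ᶠ u in 𝓝 (0 : ℝ), (pt Oa e f ra (a j u), pt Ob e' f' rb (b j u)) ∈
      {pab : Space × Space | ∃ A' B' : ℤ → Space,
      IsZigzag (circle3D Pa Oa ra) (circle3D Pb Ob rb) ℓ A' B' ∧
      (∀ i : ℤ, A' (i + n) = A' i ∧ B' (i + n) = B' i) ∧
      A' 0 = pab.1 ∧ B' 0 = pab.2} := by
    filter_upwards [hG, hneA', hneB'] with u hu hua hub
    have hj1 : ∀ i : ℤ, i + 1 + j = i + j + 1 := fun i => by ring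
    have hjn : ∀ i : ℤ, i + n + j = i + j + n := fun i => by ring
    refine ⟨fun i => pt Oa e f ra (a (i + j) u), fun i => pt Ob e' f' rb (b (i + j) u),
      ⟨fun i => (hCa _).2 ⟨_, rfl⟩, fun i => (hCb _).2 ⟨_, rfl⟩,
        fun i => (hdist _ _).2 (hu _).1, fun i => ?_, fun i => ?_, fun i => ?_⟩,
      fun i => by simp only [hjn, hap, hbp, and_self], by simp only [zero_add],
      by simp only [zero_add]⟩
    · rw [dist_comm, hdist, hj1]
      exact (hu _).2
    · simp only [hj1]
      exact hua _
    · simp only [hj1]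
      exact hub _
  -- A continuous curve in a finite set is stationary.
  have hstat : ∀ᶠ u in 𝓝 (0 : ℝ), (pt Oa e f ra (a j u), pt Ob e' f' rb (b j u)) =
      (pt Oa e f ra (a j 0), pt Ob e' f' rb (b j 0)) := by
    have hc := (hAc j).prodMk (hBc j)
    have hopen := (hfin.subset (Set.sdiff_subset
      (t := {(pt Oa e f ra (a j 0), pt Ob e' f' rb (b j 0))}))).isClosed.isOpen_compl
    have hnear := hc.eventually (hopen.mem_nhds (by simp))
    filter_upwards [hmem, hnear] with u h1 h2
    by_contra h3
    exact h2 ⟨h1, h3⟩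
  rcases hj with hj | hj
  · exact hd (deriv_eq_zero_of_stationary _ _ hj (hstat.mono fun u hu =>
      cos_sin_of_pt_eq Oa e f ra _ _ hra hee hff hef (congrArg Prod.fst hu)))
  · exact hd (deriv_eq_zero_of_stationary _ _ hj (hstat.mono fun u hu =>
      cos_sin_of_pt_eq Ob e' f' rb _ _ hrb hee' hff' hef' (congrArg Prod.snd hu)))
end

section
/- Let T > 0 and let f, g : AddCircle T → AddCircle T be measurable maps, where AddCircle T = ℝ/Tℤ. Then the map Z : AddCircle T × AddCircle T → AddCircle T × AddCircle T defined by Z(x, y) = (f(y) − x, g(f(y) − x) − y) is measure-preserving for the product of the Haar measures on the two factors. (This is the form of the zigzag map between two circles in angular coordinates; hence the zigzag map preserves the area form dφ_a ∧ dφ_b.) -/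
open MeasureTheory

/-!
The zigzag map factors as `F g ∘ F f`, where `F h (x, y) = (y, h y - x)`. Each `F h` is the swap
of the two circles followed by the skew product `(y, x) ↦ (y, h y - x)`, whose fibre maps
`x ↦ h y - x` are reflections and so preserve Haar measure.
-/

/-- The half-step of the zigzag map preserves Haar measure on the torus: it is a swap followed by
a fibrewise reflection. -/
theorem zigzag_half_step_measurePreserving (T : ℝ) [Fact (0 < T)]
    (h : AddCircle T → AddCircle T) (hh : Measurable h) :
    MeasurePreserving (fun p : AddCircle T × AddCircle T => (p.2, h p.2 - p.1))
      ((volume : Measure (AddCircle T)).prod (volume : Measure (AddCircle T)))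
      ((volume : Measure (AddCircle T)).prod (volume : Measure (AddCircle T))) := by
  have skew : MeasurePreserving (fun p : AddCircle T × AddCircle T => (p.1, h p.1 - p.2))
      ((volume : Measure (AddCircle T)).prod (volume : Measure (AddCircle T)))
      ((volume : Measure (AddCircle T)).prod (volume : Measure (AddCircle T))) :=
    (MeasurePreserving.id volume).skew_product (g := fun y x => h y - x)
      ((hh.comp measurable_fst).sub measurable_snd)
      (Filter.Eventually.of_forall fun y => (Measure.measurePreserving_sub_left volume (h y)).map_eq)
  exact skew.comp Measure.measurePreserving_swap

/-- The zigzag map in angular coordinates: for measurable `f, g : ℝ/Tℤ → ℝ/Tℤ`, the map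
`Z(x, y) = (f y − x, g (f y − x) − y)` of the 2-torus preserves the product of the Haar
measures on the two circle factors; i.e. the zigzag map preserves the area form
`dφ_a ∧ dφ_b`. -/
theorem zigzag_map_measurePreserving (T : ℝ) [hT : Fact (0 < T)]
    (f g : AddCircle T → AddCircle T) (hf : Measurable f) (hg : Measurable g) :
    MeasurePreserving (fun p : AddCircle T × AddCircle T => (f p.2 - p.1, g (f p.2 - p.1) - p.2))
      ((volume : Measure (AddCircle T)).prod (volume : Measure (AddCircle T)))
      ((volume : Measure (AddCircle T)).prod (volume : Measure (AddCircle T))) := by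
  exact (zigzag_half_step_measurePreserving T g hg).comp
    (zigzag_half_step_measurePreserving T f hf)
end

section
/- Let T > 0 and let F : ℝ → ℝ be a monotone nondecreasing function satisfying F(x + T) = F(x) + T for all x ∈ ℝ. Suppose the induced map f : AddCircle T → AddCircle T (which is well defined by the equivariance condition) preserves the Haar measure on AddCircle T. Then there exists c ∈ ℝ such that F(x) = x + c for all x ∈ ℝ; equivalently, f is a rotation of the circle. -/
open MeasureTheory

/-!
The induced map `f` sends the arc `[a, b]` into the arc `[F a, F b]` by monotonicity, so the latter
arc has a preimage of measure at least `b - a`. Invariance of the measure turns this into the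
expansion estimate `b - a ≤ F b - F a` (`sub_le_lift_sub`), valid for `a ≤ b ≤ a + T`. Applied to
the complementary arcs `[0, x]` and `[x, T]`, whose images have total length
`F T - F 0 = T`, the estimate must be an equality for both; hence `x ↦ F x - x` is constant on a
period, and it is `T`-periodic.
-/

/-- Every point of a closed ball of the circle lifts to the closed interval with the same centre and
radius. -/
lemma exists_lift_of_mem_closedBall {T : ℝ} {m r : ℝ} {y : AddCircle T}
    (hy : y ∈ Metric.closedBall (m : AddCircle T) r) :
    ∃ x : ℝ, (x : AddCircle T) = y ∧ |x - m| ≤ r := by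
  obtain ⟨x, rfl⟩ := QuotientAddGroup.mk_surjective y
  have hx : x ∈ ((↑) : ℝ → AddCircle T) ⁻¹' Metric.closedBall (m : AddCircle T) r := hy
  rw [AddCircle.coe_real_preimage_closedBall_eq_iUnion] at hx
  obtain ⟨z, hz⟩ := Set.mem_iUnion.1 hx
  refine ⟨x - z • T, ?_, ?_⟩
  · rw [AddCircle.coe_sub, AddCircle.coe_zsmul, AddCircle.coe_period, smul_zero, sub_zero]
  · rw [Metric.mem_closedBall, Real.dist_eq] at hz
    rwa [sub_sub, add_comm (z • T) m]

lemma coe_mem_closedBall {T : ℝ} {m r x : ℝ} (hx : |x - m| ≤ r) :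
    (x : AddCircle T) ∈ Metric.closedBall (m : AddCircle T) r := by
  have h : x ∈ ((↑) : ℝ → AddCircle T) ⁻¹' Metric.closedBall (m : AddCircle T) r := by
    rw [AddCircle.coe_real_preimage_closedBall_eq_iUnion]
    exact Set.mem_iUnion.2 ⟨0, by simpa [Real.dist_eq] using hx⟩
  exact h

/-- A monotone lift of a measure-preserving circle map does not shrink arcs of at most one full turn.
Arcs are encoded as closed balls about their midpoints, whose measure is `min T (2 * radius)`. -/
lemma sub_le_lift_sub {T : ℝ} [hT : Fact (0 < T)] {F : ℝ → ℝ} (hmono : Monotone F)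
    {f : AddCircle T → AddCircle T} (hlift : ∀ x : ℝ, f (x : AddCircle T) = (F x : AddCircle T))
    (hpres : MeasurePreserving f (volume : Measure (AddCircle T))
      (volume : Measure (AddCircle T))) {a b : ℝ} (hab : a ≤ b) (hb : b ≤ a + T) :
    b - a ≤ F b - F a := by
  have hF : F a ≤ F b := hmono hab
  have hsub : Metric.closedBall (((a + b) / 2 : ℝ) : AddCircle T) ((b - a) / 2) ⊆
      f ⁻¹' Metric.closedBall (((F a + F b) / 2 : ℝ) : AddCircle T) ((F b - F a) / 2) := by
    intro y hy
    obtain ⟨x, rfl, hx⟩ := exists_lift_of_mem_closedBall hy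
    rw [abs_le] at hx
    have h1 : F a ≤ F x := hmono (by linarith)
    have h2 : F x ≤ F b := hmono (by linarith)
    rw [Set.mem_preimage, hlift]
    exact coe_mem_closedBall (abs_le.2 ⟨by linarith, by linarith⟩)
  have h := measure_mono (μ := volume) hsub
  rw [hpres.measure_preimage Metric.isClosed_closedBall.measurableSet.nullMeasurableSet,
    AddCircle.volume_closedBall, AddCircle.volume_closedBall,
    mul_div_cancel₀ _ two_ne_zero, mul_div_cancel₀ _ two_ne_zero,
    min_eq_right (by linarith : b - a ≤ T)] at h
  exact ((ENNReal.ofReal_le_ofReal_iff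
    (le_min hT.out.le (by linarith))).1 h).trans (min_le_right _ _)

/-- A monotone nondecreasing `F : ℝ → ℝ` with `F (x + T) = F x + T` whose induced self-map of
the circle `ℝ/Tℤ` preserves the Haar measure is a translation: `F x = x + c` for some constant
`c`; equivalently, the induced circle map is a rotation. -/
theorem measurePreserving_circle_map_is_rotation (T : ℝ) [hT : Fact (0 < T)]
    (F : ℝ → ℝ) (hmono : Monotone F) (hequiv : ∀ x : ℝ, F (x + T) = F x + T)
    (f : AddCircle T → AddCircle T) (hlift : ∀ x : ℝ, f (x : AddCircle T) = (F x : AddCircle T))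
    (hpres : MeasurePreserving f (volume : Measure (AddCircle T))
      (volume : Measure (AddCircle T))) :
    ∃ c : ℝ, ∀ x : ℝ, F x = x + c := by
  refine ⟨F 0, fun x => ?_⟩
  have hper : Function.Periodic (fun x => F x - x) T := fun x => by
    simp only [hequiv]; ring
  obtain ⟨y, ⟨hy0, hyT⟩, hxy⟩ := hper.exists_mem_Ico₀ hT.out x
  have h1 := sub_le_lift_sub hmono hlift hpres hy0 (by linarith)
  have h2 := sub_le_lift_sub hmono hlift hpres hyT.le (by linarith)
  have h3 := hequiv 0
  rw [zero_add] at h3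
  linarith
end

section
/- Let T > 0 and let F : ℝ → ℝ be a monotone nondecreasing function satisfying F(x + T) = F(x) + T for all x ∈ ℝ, and suppose the induced map f : AddCircle T → AddCircle T preserves the Haar measure on AddCircle T. If there exist n ≥ 1 and a point x₀ ∈ AddCircle T with f⁽ⁿ⁾(x₀) = x₀ (the n-th iterate of f fixes x₀), then f⁽ⁿ⁾ is the identity map of AddCircle T, i.e. every point is periodic with period n. -/
open MeasureTheory

/-!
A monotone degree-one circle map that preserves Haar measure is a rotation, and a rotation with
one periodic point of period `n` has `n`-th iterate the identity.

To see that it is a rotation, take `a ≤ b ≤ a + T`. Monotonicity says that `f` maps the arc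
`[a, b]` into the arc `[F a, F b]`, so the preimage of the latter contains the former, and
preservation of measure gives `b - a ≤ F b - F a` (`sub_le_sub_of_lift`). The same inequality for
the complementary arc `[b, a + T]` reads `a + T - b ≤ F a + T - F b`. Together they force
`F b - F a = b - a`, so that `F x - x` is constant (`exists_eq_add_of_lift`).
-/

/-- Closed balls of the circle are used below as arcs: every point of a closed ball has a real
representative in the corresponding closed interval. -/
lemma image_Icc_eq_closedBall (T a b : ℝ) :
    ((↑) : ℝ → AddCircle T) '' Set.Icc a b
      = Metric.closedBall (((a + b) / 2 : ℝ) : AddCircle T) ((b - a) / 2) := by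
  ext p
  simp only [Set.mem_image, Set.mem_Icc, Metric.mem_closedBall, dist_eq_norm]
  constructor
  · rintro ⟨x, ⟨hax, hxb⟩, rfl⟩
    rw [← AddCircle.coe_sub]
    refine (QuotientAddGroup.norm_mk_le_norm).trans ?_
    rw [Real.norm_eq_abs, abs_le]
    constructor <;> linarith
  · intro hp
    induction p using QuotientAddGroup.induction_on with
    | H y =>
      rw [← AddCircle.coe_sub, AddCircle.norm_eq, abs_le] at hp
      -- The norm formula provides the multiple of `T` that moves `y` closest to the midpoint.
      refine ⟨y - round (T⁻¹ * (y - (a + b) / 2)) * T, ⟨by linarith [hp.1], by linarith [hp.2]⟩, ?_⟩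
      rw [AddCircle.coe_sub, ← zsmul_eq_mul, AddCircle.coe_zsmul, AddCircle.coe_period,
        smul_zero, sub_zero]

/-- A measure-preserving circle map with a monotone lift does not shorten arcs. -/
lemma sub_le_sub_of_lift {T : ℝ} [hT : Fact (0 < T)] {F : ℝ → ℝ} (hmono : Monotone F)
    {f : AddCircle T → AddCircle T} (hlift : ∀ x : ℝ, f (x : AddCircle T) = (F x : AddCircle T))
    (hpres : MeasurePreserving f (volume : Measure (AddCircle T))
      (volume : Measure (AddCircle T)))
    {a b : ℝ} (hab : a ≤ b) (hbT : b ≤ a + T) : b - a ≤ F b - F a := by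
  have hsub : ((↑) : ℝ → AddCircle T) '' Set.Icc a b
      ⊆ f ⁻¹' (((↑) : ℝ → AddCircle T) '' Set.Icc (F a) (F b)) := by
    rintro _ ⟨x, hx, rfl⟩
    exact ⟨F x, ⟨hmono hx.1, hmono hx.2⟩, (hlift x).symm⟩
  have hle := measure_mono (μ := (volume : Measure (AddCircle T))) hsub
  rw [image_Icc_eq_closedBall, image_Icc_eq_closedBall,
    hpres.measure_preimage measurableSet_closedBall.nullMeasurableSet,
    AddCircle.volume_closedBall, AddCircle.volume_closedBall,
    mul_div_cancel₀ _ two_ne_zero, mul_div_cancel₀ _ two_ne_zero,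
    min_eq_right (by linarith : b - a ≤ T),
    ENNReal.ofReal_le_ofReal_iff (le_min hT.out.le (sub_nonneg.2 (hmono hab)))] at hle
  exact hle.trans (min_le_right _ _)

/-- A measure-preserving circle map with a monotone degree-one lift is a rotation. -/
lemma exists_eq_add_of_lift {T : ℝ} [hT : Fact (0 < T)] {F : ℝ → ℝ} (hmono : Monotone F)
    (hequiv : ∀ x : ℝ, F (x + T) = F x + T)
    {f : AddCircle T → AddCircle T} (hlift : ∀ x : ℝ, f (x : AddCircle T) = (F x : AddCircle T))
    (hpres : MeasurePreserving f (volume : Measure (AddCircle T))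
      (volume : Measure (AddCircle T))) :
    ∃ c : AddCircle T, ∀ x, f x = c + x := by
  refine ⟨(F 0 : ℝ), fun p => ?_⟩
  obtain ⟨x, hx, rfl⟩ : p ∈ ((↑) : ℝ → AddCircle T) '' Set.Ico 0 (0 + T) := by
    rw [AddCircle.coe_image_Ico_eq]
    trivial
  have h₁ := sub_le_sub_of_lift hmono hlift hpres hx.1 hx.2.le
  have h₂ := sub_le_sub_of_lift hmono hlift hpres hx.2.le (by linarith [hx.1])
  rw [hequiv] at h₂
  rw [hlift, ← AddCircle.coe_add]
  congr 1
  linarith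

/-- Let `F : ℝ → ℝ` be monotone nondecreasing with `F (x + T) = F x + T`, whose induced
self-map `f` of the circle `ℝ/Tℤ` preserves the Haar measure. If some point of the circle is
fixed by the `n`-th iterate of `f` (with `n ≥ 1`), then the `n`-th iterate of `f` is the
identity, i.e. every point is periodic with period `n`. -/
theorem measurePreserving_circle_map_periodic_porism (T : ℝ) [hT : Fact (0 < T)]
    (F : ℝ → ℝ) (hmono : Monotone F) (hequiv : ∀ x : ℝ, F (x + T) = F x + T)
    (f : AddCircle T → AddCircle T) (hlift : ∀ x : ℝ, f (x : AddCircle T) = (F x : AddCircle T))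
    (hpres : MeasurePreserving f (volume : Measure (AddCircle T))
      (volume : Measure (AddCircle T)))
    (n : ℕ) (hn : 1 ≤ n) (x₀ : AddCircle T) (hx₀ : f^[n] x₀ = x₀) :
    ∀ x : AddCircle T, f^[n] x = x := by
  obtain ⟨c, hc⟩ := exists_eq_add_of_lift hmono hequiv hlift hpres
  obtain rfl : f = (c + ·) := funext hc
  intro x
  rw [add_left_iterate] at hx₀ ⊢
  rw [add_eq_right.1 hx₀]
  exact zero_add x
end
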